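/- Let p > 3 be a prime and let t be an integer with 3t ≢ 5 (mod p) and 3t ≢ -5 (mod p). Then Σ_{k=0}^{(p-1)/2} C(2k,k)^2·C(4k,2k) · ((1-t^2)/256)^k ≡ (10+6t | p) · Σ_{k=0}^{⌊p/6⌋} C(2k,k)·C(3k,k)·C(6k,3k) · ((t-1)^2(t+1)/(64(3t+5)^3))^k ≡ (10-6t | p) · Σ_{k=0}^{⌊p/6⌋} C(2k,k)·C(3k,k)·C(6k,3k) · ((t+1)^2(t-1)/(64(3t-5)^3))^k (mod p). -/

import Mathlib

open Finset

/-!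
In the variable `x = t - 1` both sides are polynomials of degree less than `p` over a field of
characteristic `p`, once the quadratic character of `10 + 6 t` is written as the power
`(10 + 6 t) ^ (p / 2)`, which clears the denominators of the second sum. They are truncations of
two hypergeometric series which solve the same third order linear differential equation. Applying
its operator to the truncations telescopes, and the single boundary term carries the factor
`2 k + 1` at `k = p / 2`, respectively `(6 k + 1) (6 k + 5)` at `k = p / 6`, hence vanishes modulo
`p`. All exponents of the equation at `x = 0` are zero, so that a polynomial solution of degree
less than `p` is determined by its value at `0`, and this value is `1` on both sides.
-/

section LogDeriv

variable {R A : Type*} [CommRing R] [CommRing A] [Algebra R A]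

/-- `f` has logarithmic derivative `q / w` with respect to the derivation `D`. The denominator is
cleared, so that the notion makes sense in any commutative ring. -/
def HasLogDeriv (D : Derivation R A A) (q w f : A) : Prop :=
  w * D f = q * f

/-- The numerators of the iterated derivatives of an `f` with logarithmic derivative `q / w`:
`D^[n] f / f` is `iterLogDeriv D q w n / w ^ n`. -/
def iterLogDeriv (D : Derivation R A A) (q w : A) : ℕ → A
  | 0 => 1
  | n + 1 => w * D (iterLogDeriv D q w n) + (q - n * D w) * iterLogDeriv D q w n

variable {D : Derivation R A A} {q r w f g : A}

theorem HasLogDeriv.mul (hf : HasLogDeriv D q w f) (hg : HasLogDeriv D r w g) :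
    HasLogDeriv D (q + r) w (f * g) := by
  unfold HasLogDeriv at *
  rw [D.leibniz, smul_eq_mul, smul_eq_mul]
  linear_combination g * hf + f * hg

theorem HasLogDeriv.pow (hf : HasLogDeriv D q w f) (n : ℕ) :
    HasLogDeriv D (n * q) w (f ^ n) := by
  induction n with
  | zero => simp [HasLogDeriv]
  | succ n ih =>
    rw [pow_succ, Nat.cast_succ, add_one_mul]
    exact ih.mul hf

theorem HasLogDeriv.pow_mul_iterate (hf : HasLogDeriv D q w f) (n : ℕ) :
    w ^ n * D^[n] f = iterLogDeriv D q w n * f := by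
  induction n with
  | zero => simp [iterLogDeriv]
  | succ n ih =>
    have deriv_ih := congrArg (fun a ↦ w * D a) ih
    have hw : w * D (w ^ n) = n * D w * w ^ n := HasLogDeriv.pow (mul_comm w (D w)) n
    unfold HasLogDeriv at hf
    simp only [D.leibniz, smul_eq_mul] at deriv_ih
    rw [Function.iterate_succ_apply', iterLogDeriv]
    linear_combination deriv_ih - D^[n] f * hw - n * D w * ih + iterLogDeriv D q w n * hf

end LogDeriv

section Telescoping

theorem sum_range_smul_sub_smul_of_recurrence {R M : Type*} [CommRing R] [AddCommGroup M]
    [Module R M] {u v c : ℕ → R} (z : ℕ → M) (hu : u 0 = 0)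
    (hc : ∀ k, v k * c k = u (k + 1) * c (k + 1)) (n : ℕ) :
    ∑ k ∈ range (n + 1), c k • (u k • z k - v k • z (k + 1)) = -((v n * c n) • z (n + 1)) := by
  induction n with
  | zero => simp [hu, smul_smul, mul_comm]
  | succ n ih =>
    rw [sum_range_succ, ih, hc]
    module

theorem map_sum_smul_eq_zero_of_recurrence {R M A : Type*} [CommRing R] [AddCommGroup M]
    [Module R M] [CommRing A] [IsDomain A] [Algebra R A] (L : M →ₗ[R] A) {u v c : ℕ → R}
    {e : ℕ → M} {z : ℕ → A} {w g : A} {n : ℕ} (hw : w ≠ 0)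
    (hL : ∀ k ≤ n, w * L (e k) = g * (u k • z k - v k • z (k + 1))) (hu : u 0 = 0)
    (hc : ∀ k, v k * c k = u (k + 1) * c (k + 1)) (hv : v n = 0) :
    L (∑ k ∈ range (n + 1), c k • e k) = 0 := by
  refine (mul_eq_zero.mp ?_).resolve_left hw
  calc w * L (∑ k ∈ range (n + 1), c k • e k)
      = ∑ k ∈ range (n + 1), c k • (w * L (e k)) := by
        simp only [map_sum, map_smul, mul_sum, mul_smul_comm]
    _ = g * ∑ k ∈ range (n + 1), c k • (u k • z k - v k • z (k + 1)) := by
        rw [mul_sum]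
        refine sum_congr rfl fun k hk ↦ ?_
        rw [hL k (mem_range_succ_iff.mp hk), mul_smul_comm]
    _ = 0 := by
        rw [sum_range_smul_sub_smul_of_recurrence z hu hc, hv, zero_mul, zero_smul, neg_zero,
          mul_zero]

end Telescoping

section Coefficients

/-- The coefficients `(4k)! / k!⁴` of the first sum, which are those of Ramanujan's series of
level two. -/
def levelTwoCoeff (k : ℕ) : ℕ :=
  Nat.choose (2 * k) k ^ 2 * Nat.choose (4 * k) (2 * k)

/-- The coefficients `(6k)! / ((3k)! k!³)` of the second sum, which are those of Ramanujan's series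
of level one. -/
def levelOneCoeff (k : ℕ) : ℕ :=
  Nat.choose (2 * k) k * Nat.choose (3 * k) k * Nat.choose (6 * k) (3 * k)

open Nat

theorem levelTwoCoeff_mul_factorial (k : ℕ) : levelTwoCoeff k * k ! ^ 4 = (4 * k)! := by
  have h₂ := Nat.choose_mul_factorial_mul_factorial (show k ≤ 2 * k by lia)
  have h₄ := Nat.choose_mul_factorial_mul_factorial (show 2 * k ≤ 4 * k by lia)
  rw [show 2 * k - k = k by lia] at h₂
  rw [show 4 * k - 2 * k = 2 * k by lia] at h₄
  rw [← h₄, ← h₂, levelTwoCoeff]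
  ring

theorem levelOneCoeff_mul_factorial (k : ℕ) :
    levelOneCoeff k * ((3 * k)! * k ! ^ 3) = (6 * k)! := by
  have h₂ := Nat.choose_mul_factorial_mul_factorial (show k ≤ 2 * k by lia)
  have h₃ := Nat.choose_mul_factorial_mul_factorial (show k ≤ 3 * k by lia)
  have h₆ := Nat.choose_mul_factorial_mul_factorial (show 3 * k ≤ 6 * k by lia)
  rw [show 2 * k - k = k by lia] at h₂
  rw [show 3 * k - k = 2 * k by lia] at h₃
  rw [show 6 * k - 3 * k = 3 * k by lia] at h₆
  rw [levelOneCoeff]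
  linear_combination
    h₆ + (6 * k).choose (3 * k) * (3 * k)! * (h₃ + (3 * k).choose k * k ! * h₂)

theorem levelTwoCoeff_succ (k : ℕ) :
    (k + 1) ^ 3 * levelTwoCoeff (k + 1) =
      8 * ((2 * k + 1) * (4 * k + 1) * (4 * k + 3)) * levelTwoCoeff k := by
  have hk := levelTwoCoeff_mul_factorial k
  have hk' := levelTwoCoeff_mul_factorial (k + 1)
  rw [show 4 * (k + 1) = 4 * k + 1 + 1 + 1 + 1 by ring] at hk'
  simp only [factorial_succ, ← hk] at hk'
  apply Nat.eq_of_mul_eq_mul_left (show 0 < (k + 1) * k ! ^ 4 by positivity)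
  linear_combination hk'

theorem levelOneCoeff_succ (k : ℕ) :
    (k + 1) ^ 3 * levelOneCoeff (k + 1) =
      24 * ((2 * k + 1) * (6 * k + 1) * (6 * k + 5)) * levelOneCoeff k := by
  have hk := levelOneCoeff_mul_factorial k
  have hk' := levelOneCoeff_mul_factorial (k + 1)
  rw [show 3 * (k + 1) = 3 * k + 1 + 1 + 1 by ring,
    show 6 * (k + 1) = 6 * k + 1 + 1 + 1 + 1 + 1 + 1 by ring] at hk'
  simp only [factorial_succ, ← hk] at hk'
  apply Nat.eq_of_mul_eq_mul_left
    (show 0 < (3 * k + 1) * (3 * k + 2) * (3 * k + 3) * ((3 * k)! * k ! ^ 3) by positivity)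
  linear_combination hk'

end Coefficients

open Polynomial

section Operator

variable {R : Type*} [CommRing R]

/-- The Euler derivation `X * d/dX` on polynomials. -/
noncomputable def eulerDerivation : Derivation R R[X] R[X] :=
  mkDerivation R X

local notation "θ" => eulerDerivation

@[simp]
theorem eulerDerivation_X : θ (X : R[X]) = X :=
  mkDerivation_X R X

@[simp]
theorem eulerDerivation_ofNat (n : ℕ) [n.AtLeastTwo] : θ (ofNat(n) : R[X]) = 0 :=
  eulerDerivation.map_natCast n

theorem coeff_eulerDerivation (f : R[X]) (n : ℕ) : (θ f).coeff n = n * f.coeff n := by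
  rw [eulerDerivation, mkDerivation_apply, smul_eq_mul]
  cases n with
  | zero => simp
  | succ n => rw [coeff_mul_X, coeff_derivative, Nat.cast_succ, mul_comm]

theorem X_pow_dvd_eulerDerivation {n : ℕ} {f : R[X]} (hf : X ^ n ∣ f) : X ^ n ∣ θ f := by
  rw [X_pow_dvd_iff] at hf ⊢
  intro d hd
  rw [coeff_eulerDerivation, hf d hd, mul_zero]

/-- The third order differential operator, in the variable `X = t - 1`, that annihilates both sides
of the congruence. -/
noncomputable def cubicOperator : R[X] →ₗ[R] R[X] :=
  let D : Module.End R R[X] := eulerDerivation.toLinearMap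
  LinearMap.mulLeft R (4 * (X + 2) ^ 2) * D ^ 3 + LinearMap.mulLeft R (12 * X * (X + 2)) * D ^ 2
    + LinearMap.mulLeft R (X * (11 * X + 14)) * D + LinearMap.mulLeft R (3 * X * (X + 1))

theorem cubicOperator_apply (f : R[X]) :
    cubicOperator f = 4 * (X + 2) ^ 2 * θ (θ (θ f)) + 12 * X * (X + 2) * θ (θ f)
      + X * (11 * X + 14) * θ f + 3 * X * (X + 1) * f :=
  rfl

theorem coeff_cubicOperator_of_X_pow_dvd {n : ℕ} {f : R[X]} (hf : X ^ n ∣ f) :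
    (cubicOperator f).coeff n = 16 * n ^ 3 * f.coeff n := by
  have hf₁ := X_pow_dvd_eulerDerivation hf
  have hf₂ := X_pow_dvd_eulerDerivation hf₁
  have hf₃ := X_pow_dvd_eulerDerivation hf₂
  obtain ⟨g, hg⟩ : X ^ n ∣ 4 * (X + 4) * θ (θ (θ f)) + 12 * (X + 2) * θ (θ f)
      + (11 * X + 14) * θ f + 3 * (X + 1) * f :=
    dvd_add (dvd_add (dvd_add (hf₃.mul_left _) (hf₂.mul_left _)) (hf₁.mul_left _)) (hf.mul_left _)
  have leading : cubicOperator f = C 16 * θ (θ (θ f)) + X ^ (n + 1) * g := by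
    rw [cubicOperator_apply, map_ofNat C]
    linear_combination X * hg
  rw [leading, coeff_add, coeff_C_mul, coeff_X_pow_mul', if_neg (by lia)]
  simp only [coeff_eulerDerivation]
  ring

theorem eq_zero_of_cubicOperator_eq_zero [IsDomain R] (p : ℕ) [CharP R p] (h2 : (2 : R) ≠ 0)
    {f : R[X]} (hf : cubicOperator f = 0) (hf₀ : f.coeff 0 = 0) (hdeg : f.natDegree < p) :
    f = 0 := by
  by_contra hne
  set n := f.natTrailingDegree
  have hn : f.coeff n ≠ 0 := mt trailingCoeff_eq_zero.mp hne
  have hdvd : X ^ n ∣ f :=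
    X_pow_dvd_iff.mpr fun d hd ↦ coeff_eq_zero_of_lt_natTrailingDegree hd
  have h16 : (16 : R) ≠ 0 := by
    rw [show (16 : R) = 2 ^ 4 by norm_num]
    exact pow_ne_zero 4 h2
  have hnR : (n : R) = 0 := by
    have := coeff_cubicOperator_of_X_pow_dvd hdvd
    simpa [hf, hn, h16] using this.symm
  have hn₀ : n = 0 :=
    Nat.eq_zero_of_dvd_of_lt ((CharP.cast_eq_zero_iff R p n).mp hnR)
      ((natTrailingDegree_le_natDegree f).trans_lt hdeg)
  exact hn (hn₀ ▸ hf₀)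

theorem HasLogDeriv.mul_cubicOperator {q v f : R[X]} (hf : HasLogDeriv θ q ((X + 2) * v) f) :
    (X + 2) * v ^ 3 * cubicOperator f =
      (4 * iterLogDeriv θ q ((X + 2) * v) 3 + 12 * X * v * iterLogDeriv θ q ((X + 2) * v) 2
        + X * (11 * X + 14) * v ^ 2 * q + 3 * X * (X + 1) * (X + 2) * v ^ 3) * f := by
  have hf₂ := hf.pow_mul_iterate 2
  have hf₃ := hf.pow_mul_iterate 3
  simp only [Function.iterate_succ_apply', Function.iterate_zero_apply] at hf₂ hf₃
  rw [HasLogDeriv] at hf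
  rw [cubicOperator_apply]
  linear_combination 4 * hf₃ + 12 * X * v * hf₂ + X * (11 * X + 14) * v ^ 2 * hf

theorem mul_cubicOperator_levelTwoTerm (k : ℕ) :
    (X + 2) * cubicOperator ((-(X * (X + 2)) : R[X]) ^ k) =
      (X + 1) * ((32 * (k : R) ^ 3) • (-(X * (X + 2))) ^ k
        - ((2 * k + 1) * (4 * k + 1) * (4 * k + 3) : R) • (-(X * (X + 2))) ^ (k + 1)) := by
  have base : HasLogDeriv θ (2 * (X + 1)) ((X + 2) * 1) (-(X * (X + 2)) : R[X]) := by
    simp only [HasLogDeriv, map_neg, map_add, Derivation.leibniz, smul_eq_mul, eulerDerivation_X,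
      eulerDerivation_ofNat]
    ring
  have := (base.pow k).mul_cubicOperator
  simp only [iterLogDeriv, map_add, map_sub, Derivation.leibniz, Derivation.map_natCast,
    Derivation.map_one_eq_zero, smul_eq_mul, eulerDerivation_X, eulerDerivation_ofNat,
    map_zero] at this
  simp only [smul_eq_C_mul, map_mul, map_add, map_pow, map_ofNat C, map_natCast C, map_one]
  push_cast at this
  linear_combination this

theorem mul_cubicOperator_levelOneTerm {h k : ℕ} (hk : 3 * k ≤ h) (hh : 2 * (h : R) + 1 = 0) :
    (X + 2) * (6 * X + 16) ^ 3 *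
        cubicOperator ((X ^ 2 * (X + 2) : R[X]) ^ k * (6 * X + 16) ^ (h - 3 * k)) =
      16 * (9 * X + 16) * (((k : R) ^ 3) •
          ((X ^ 2 * (X + 2)) ^ k * (6 * X + 16) ^ (h + 3 - 3 * k))
        - (3 * ((2 * k + 1) * (6 * k + 1) * (6 * k + 5)) : R) •
          ((X ^ 2 * (X + 2)) ^ (k + 1) * (6 * X + 16) ^ (h + 3 - 3 * (k + 1)))) := by
  have hhX : 2 * (h : R[X]) + 1 = 0 := by
    simpa only [map_add, map_mul, map_ofNat C, map_natCast C, map_one, map_zero] using congrArg C hh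
  have base₁ : HasLogDeriv θ ((3 * X + 4) * (6 * X + 16)) ((X + 2) * (6 * X + 16))
      (X ^ 2 * (X + 2) : R[X]) := by
    simp only [HasLogDeriv, map_add, pow_two, Derivation.leibniz, smul_eq_mul, eulerDerivation_X,
      eulerDerivation_ofNat]
    ring
  have base₂ : HasLogDeriv θ (6 * X * (X + 2)) ((X + 2) * (6 * X + 16)) (6 * X + 16 : R[X]) := by
    simp only [HasLogDeriv, map_add, Derivation.leibniz, smul_eq_mul, eulerDerivation_X,
      eulerDerivation_ofNat]
    ring
  have numerator : (k : R[X]) * ((3 * X + 4) * (6 * X + 16))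
      + ((h - 3 * k : ℕ) : R[X]) * (6 * X * (X + 2)) =
        4 * (k : R[X]) * (9 * X + 16) - 3 * X * (X + 2) := by
    rw [Nat.cast_sub hk]
    push_cast
    linear_combination 3 * X * (X + 2) * hhX
  have := (numerator ▸ (base₁.pow k).mul (base₂.pow (h - 3 * k))).mul_cubicOperator
  simp only [iterLogDeriv, map_add, map_sub, Derivation.leibniz, Derivation.map_natCast,
    Derivation.map_one_eq_zero, smul_eq_mul, eulerDerivation_X, eulerDerivation_ofNat,
    map_zero] at this
  simp only [smul_eq_C_mul, map_mul, map_add, map_pow, map_ofNat C, map_natCast C, map_one]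
  rw [show h + 3 - 3 * k = h - 3 * k + 3 by lia, show h + 3 - 3 * (k + 1) = h - 3 * k by lia]
  push_cast at this
  linear_combination this

end Operator

section Polynomials

variable (F : Type*) [Field F]

/-- The first sum truncated at `h`, as a polynomial in `X = t - 1`, so that
`1 - t ^ 2 = -(X * (X + 2))`. -/
noncomputable def levelTwoPoly (h : ℕ) : F[X] :=
  ∑ k ∈ range (h + 1), (levelTwoCoeff k / 256 ^ k : F) • (-(X * (X + 2))) ^ k

/-- The second sum truncated at `N` and multiplied by `(10 + 6 * t) ^ h`, as a polynomial in
`X = t - 1`. It is meant for `3 * N ≤ h`, where the exponents are not truncated. -/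
noncomputable def levelOnePoly (h N : ℕ) : F[X] :=
  ∑ k ∈ range (N + 1),
    (levelOneCoeff k / 8 ^ k : F) • ((X ^ 2 * (X + 2)) ^ k * (6 * X + 16) ^ (h - 3 * k))

variable {F}

theorem eval_levelTwoPoly (h : ℕ) (t : F) :
    (levelTwoPoly F h).eval (t - 1) =
      ∑ k ∈ range (h + 1), levelTwoCoeff k * ((1 - t ^ 2) / 256) ^ k := by
  simp only [levelTwoPoly, eval_finsetSum, eval_smul, eval_pow, eval_neg, eval_mul, eval_add,
    eval_X, eval_ofNat, smul_eq_mul]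
  refine sum_congr rfl fun k _ ↦ ?_
  rw [div_pow, show -((t - 1) * (t - 1 + 2)) = 1 - t ^ 2 by ring]
  ring

theorem eval_levelOnePoly {h N : ℕ} (hN : 3 * N ≤ h) (h2 : (2 : F) ≠ 0) {t : F}
    (ht : 3 * t + 5 ≠ 0) :
    (levelOnePoly F h N).eval (t - 1) =
      (10 + 6 * t) ^ h * ∑ k ∈ range (N + 1),
        levelOneCoeff k * ((t - 1) ^ 2 * (t + 1) / (64 * (3 * t + 5) ^ 3)) ^ k := by
  simp only [levelOnePoly, eval_finsetSum, eval_smul, eval_pow, eval_mul, eval_add,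
    eval_X, eval_ofNat, smul_eq_mul, mul_sum]
  refine sum_congr rfl fun k hk ↦ ?_
  have hkh : 3 * k ≤ h := by grind
  have split : (10 + 6 * t) ^ h = (10 + 6 * t) ^ (h - 3 * k) * (8 * (3 * t + 5) ^ 3) ^ k := by
    rw [← Nat.sub_add_cancel hkh, pow_add, pow_mul, Nat.add_sub_cancel]
    ring
  rw [split, div_pow, show t - 1 + 2 = t + 1 by ring,
    show 6 * (t - 1) + 16 = 10 + 6 * t by ring,
    show 64 * (3 * t + 5) ^ 3 = 8 * (8 * (3 * t + 5) ^ 3) by ring, mul_pow 8 (8 * _)]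
  have h8 : (8 : F) ≠ 0 := by
    rw [show (8 : F) = 2 ^ 3 by norm_num]
    exact pow_ne_zero 3 h2
  have hw : (8 * (3 * t + 5) ^ 3) ^ k ≠ 0 := pow_ne_zero k (mul_ne_zero h8 (pow_ne_zero 3 ht))
  generalize (8 * (3 * t + 5) ^ 3) ^ k = w at *
  field_simp

theorem coeff_zero_levelTwoPoly (h : ℕ) : (levelTwoPoly F h).coeff 0 = 1 := by
  rw [coeff_zero_eq_eval_zero, ← sub_self (1 : F), eval_levelTwoPoly, sum_range_succ']
  simp [levelTwoCoeff]

theorem coeff_zero_levelOnePoly (h N : ℕ) : (levelOnePoly F h N).coeff 0 = 16 ^ h := by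
  simp [levelOnePoly, coeff_zero_eq_eval_zero, eval_finsetSum, sum_range_succ', levelOneCoeff]

theorem natDegree_levelTwoPoly_le (h : ℕ) : (levelTwoPoly F h).natDegree ≤ 2 * h := by
  refine natDegree_sum_le_of_forall_le _ _ fun k hk ↦ (natDegree_smul_le _ _).trans ?_
  have base : (-(X * (X + 2)) : F[X]).natDegree ≤ 2 := by compute_degree
  refine (natDegree_pow_le_of_le k base).trans ?_
  grind

theorem natDegree_levelOnePoly_le {h N : ℕ} (hN : 3 * N ≤ h) :
    (levelOnePoly F h N).natDegree ≤ h := by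
  refine natDegree_sum_le_of_forall_le _ _ fun k hk ↦ (natDegree_smul_le _ _).trans ?_
  have base₁ : (X ^ 2 * (X + 2) : F[X]).natDegree ≤ 3 := by compute_degree
  have base₂ : (6 * X + 16 : F[X]).natDegree ≤ 1 := by compute_degree
  refine (natDegree_mul_le_of_le (natDegree_pow_le_of_le k base₁)
    (natDegree_pow_le_of_le _ base₂)).trans ?_
  grind

theorem cubicOperator_levelTwoPoly {h : ℕ} (hh : 2 * (h : F) + 1 = 0) :
    cubicOperator (levelTwoPoly F h) = 0 := by
  have h256 : (256 : F) ≠ 0 := by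
    rw [show (256 : F) = 2 ^ 8 by norm_num]
    exact pow_ne_zero 8 (by rintro h2; simp [h2] at hh)
  have recurrence (k : ℕ) :
      ((2 * k + 1) * (4 * k + 1) * (4 * k + 3)) * (levelTwoCoeff k / 256 ^ k) =
        (32 * ((k + 1 : ℕ) : F) ^ 3) * (levelTwoCoeff (k + 1) / 256 ^ (k + 1)) := by
    have := congrArg (Nat.cast : ℕ → F) (levelTwoCoeff_succ k)
    push_cast at this ⊢
    field_simp
    linear_combination -32 * 256 ^ k * this
  have leading_ne_zero : (X + 2 : F[X]) ≠ 0 := by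
    simpa only [map_ofNat C] using X_add_C_ne_zero (2 : F)
  exact map_sum_smul_eq_zero_of_recurrence cubicOperator (u := fun k ↦ 32 * (k : F) ^ 3)
    (v := fun k ↦ (2 * (k : F) + 1) * (4 * k + 1) * (4 * k + 3))
    (z := fun k ↦ (-(X * (X + 2))) ^ k) leading_ne_zero
    (fun k _ ↦ mul_cubicOperator_levelTwoTerm k) (by simp) recurrence (by simp [hh])

theorem cubicOperator_levelOnePoly {h N : ℕ} (hN : 3 * N ≤ h) (hh : 2 * (h : F) + 1 = 0)
    (hN₀ : (6 * N + 1) * (6 * N + 5) = (0 : F)) :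
    cubicOperator (levelOnePoly F h N) = 0 := by
  have h2 : (2 : F) ≠ 0 := by rintro h2; simp [h2] at hh
  have h8 : (8 : F) ≠ 0 := by
    rw [show (8 : F) = 2 ^ 3 by norm_num]
    exact pow_ne_zero 3 h2
  have recurrence (k : ℕ) :
      (3 * ((2 * k + 1) * (6 * k + 1) * (6 * k + 5))) * (levelOneCoeff k / 8 ^ k) =
        ((k + 1 : ℕ) : F) ^ 3 * (levelOneCoeff (k + 1) / 8 ^ (k + 1)) := by
    have := congrArg (Nat.cast : ℕ → F) (levelOneCoeff_succ k)
    push_cast at this ⊢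
    field_simp
    linear_combination -8 ^ k * this
  have leading_ne_zero : (X + 2) * (6 * X + 16) ^ 3 ≠ (0 : F[X]) := fun h0 ↦
    pow_ne_zero 13 h2 <| calc
      (2 : F) ^ 13 = eval 0 ((X + 2) * (6 * X + 16) ^ 3) := by norm_num
      _ = 0 := by rw [h0, eval_zero]
  exact map_sum_smul_eq_zero_of_recurrence cubicOperator (u := fun k ↦ (k : F) ^ 3)
    (v := fun k ↦ 3 * ((2 * (k : F) + 1) * (6 * k + 1) * (6 * k + 5)))
    (z := fun k ↦ (X ^ 2 * (X + 2)) ^ k * (6 * X + 16) ^ (h + 3 - 3 * k)) leading_ne_zero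
    (fun k hk ↦ mul_cubicOperator_levelOneTerm (by lia) hh) (by simp) recurrence
    (by linear_combination 3 * (2 * N + 1) * hN₀)

end Polynomials

section CharP

variable {F : Type*} [Field F] (p : ℕ) [Fact p.Prime] [CharP F p]

theorem natCast_pow_char_sub_one {a : ℕ} (ha : (a : F) ≠ 0) : (a : F) ^ (p - 1) = 1 := by
  have frobenius_fixed : (a : F) ^ p = a := map_natCast (frobenius F p) a
  apply mul_right_cancel₀ ha
  rw [pow_sub_one_mul (NeZero.ne p), frobenius_fixed, one_mul]

theorem two_mul_natCast_half_char_add_one (hp : p ≠ 2) : 2 * ((p / 2 : ℕ) : F) + 1 = 0 := by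
  have hp2 : p % 2 = 1 := (Fact.out : p.Prime).mod_two_eq_one_iff_ne_two.mpr hp
  rw [← CharP.cast_eq_zero F p]
  exact_mod_cast congrArg Nat.cast (show 2 * (p / 2) + 1 = p by lia)

theorem sixteen_pow_half_char (hp : p ≠ 2) : (16 : F) ^ (p / 2) = 1 := by
  have hp2 : p % 2 = 1 := (Fact.out : p.Prime).mod_two_eq_one_iff_ne_two.mpr hp
  have h2 : ((2 : ℕ) : F) ≠ 0 := Ring.two_ne_zero (by rwa [ringChar.eq F p])
  calc (16 : F) ^ (p / 2) = ((2 : ℕ) ^ 4 : F) ^ (p / 2) := by norm_num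
    _ = (((2 : ℕ) : F) ^ (p - 1)) ^ 2 := by
      rw [← pow_mul, ← pow_mul, show 4 * (p / 2) = (p - 1) * 2 by lia]
    _ = 1 := by rw [natCast_pow_char_sub_one p h2, one_pow]

theorem levelTwoPoly_eq_levelOnePoly (hp : 3 < p) :
    levelTwoPoly F (p / 2) = levelOnePoly F (p / 2) (p / 6) := by
  have hprime : p.Prime := Fact.out
  have hp2 : p % 2 = 1 := hprime.mod_two_eq_one_iff_ne_two.mpr (by lia)
  have hp3 : ¬ 3 ∣ p := fun h ↦ by
    have := (Nat.prime_dvd_prime_iff_eq Nat.prime_three hprime).mp h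
    lia
  have half : 2 * ((p / 2 : ℕ) : F) + 1 = 0 := two_mul_natCast_half_char_add_one p (by lia)
  have sixth : (6 * (p / 6 : ℕ) + 1) * (6 * (p / 6 : ℕ) + 5) = (0 : F) := by
    rcases (show 6 * (p / 6) + 1 = p ∨ 6 * (p / 6) + 5 = p by lia) with h | h
    all_goals
      have := congrArg (Nat.cast : ℕ → F) h
      push_cast [CharP.cast_eq_zero F p] at this
      simp [this]
  have h2 : (2 : F) ≠ 0 := Ring.two_ne_zero (by rw [ringChar.eq F p]; lia)
  have degree_le : (levelTwoPoly F (p / 2) - levelOnePoly F (p / 2) (p / 6)).natDegree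
      ≤ 2 * (p / 2) :=
    natDegree_sub_le_of_le (natDegree_levelTwoPoly_le _)
      ((natDegree_levelOnePoly_le (by lia)).trans (by lia)) |>.trans (max_self _).le
  rw [← sub_eq_zero]
  refine eq_zero_of_cubicOperator_eq_zero p h2 ?_ ?_ (by lia)
  · rw [map_sub, cubicOperator_levelTwoPoly half, cubicOperator_levelOnePoly (by lia) half sixth,
      sub_zero]
  · rw [coeff_sub, coeff_zero_levelTwoPoly, coeff_zero_levelOnePoly,
      sixteen_pow_half_char p (by lia), sub_self]

theorem sum_levelTwoCoeff_eq_sum_levelOneCoeff (hp : 3 < p) {t : F} (ht : 3 * t ≠ -5) :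
    ∑ k ∈ range ((p - 1) / 2 + 1), (levelTwoCoeff k : F) * ((1 - t ^ 2) / 256) ^ k =
      (10 + 6 * t) ^ (p / 2) * ∑ k ∈ range (p / 6 + 1),
        levelOneCoeff k * ((t - 1) ^ 2 * (t + 1) / (64 * (3 * t + 5) ^ 3)) ^ k := by
  have hp2 : p % 2 = 1 := (Fact.out : p.Prime).mod_two_eq_one_iff_ne_two.mpr (by lia)
  have h2 : (2 : F) ≠ 0 := Ring.two_ne_zero (by rw [ringChar.eq F p]; lia)
  have ht' : 3 * t + 5 ≠ 0 := fun h ↦ ht (eq_neg_of_add_eq_zero_left h)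
  rw [show (p - 1) / 2 = p / 2 by lia, ← eval_levelTwoPoly, levelTwoPoly_eq_levelOnePoly p hp,
    eval_levelOnePoly (by lia) h2 ht']

end CharP

theorem stmt_2_general {F : Type*} [Field F] (p : ℕ) [Fact p.Prime] [CharP F p] (hp : 3 < p)
    (t : F) (h1 : 3 * t ≠ 5) (h2 : 3 * t ≠ -5) :
    (∑ k ∈ range ((p - 1) / 2 + 1), (levelTwoCoeff k : F) * ((1 - t ^ 2) / 256) ^ k) =
        (10 + 6 * t) ^ (p / 2) * ∑ k ∈ range (p / 6 + 1),
          levelOneCoeff k * ((t - 1) ^ 2 * (t + 1) / (64 * (3 * t + 5) ^ 3)) ^ k ∧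
      (∑ k ∈ range ((p - 1) / 2 + 1), (levelTwoCoeff k : F) * ((1 - t ^ 2) / 256) ^ k) =
        (10 - 6 * t) ^ (p / 2) * ∑ k ∈ range (p / 6 + 1),
          levelOneCoeff k * ((t + 1) ^ 2 * (t - 1) / (64 * (3 * t - 5) ^ 3)) ^ k := by
  refine ⟨sum_levelTwoCoeff_eq_sum_levelOneCoeff p hp h2, ?_⟩
  have reflected := sum_levelTwoCoeff_eq_sum_levelOneCoeff p hp (t := -t) fun h ↦
    h1 (by linear_combination -h)
  have argument : (-t - 1) ^ 2 * (-t + 1) / (64 * (3 * -t + 5) ^ 3) =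
      (t + 1) ^ 2 * (t - 1) / (64 * (3 * t - 5) ^ 3) := by
    rw [← neg_div_neg_eq]
    congr 1 <;> ring
  rwa [argument, neg_sq, mul_neg, ← sub_eq_add_neg] at reflected

theorem stmt_2 (p : ℕ) [Fact p.Prime] (hp : 3 < p) (t : ℤ)
    (h1 : ¬ (3 * t ≡ 5 [ZMOD (p : ℤ)])) (h2 : ¬ (3 * t ≡ -5 [ZMOD (p : ℤ)])) :
    (∑ k ∈ Finset.range ((p - 1) / 2 + 1),
        (Nat.choose (2 * k) k : ZMod p) ^ 2 * (Nat.choose (4 * k) (2 * k) : ZMod p) *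
          ((1 - (t : ZMod p) ^ 2) / 256) ^ k)
      = ((legendreSym p (10 + 6 * t) : ℤ) : ZMod p) *
          ∑ k ∈ Finset.range (p / 6 + 1),
            (Nat.choose (2 * k) k : ZMod p) * (Nat.choose (3 * k) k : ZMod p) *
              (Nat.choose (6 * k) (3 * k) : ZMod p) *
              (((t : ZMod p) - 1) ^ 2 * ((t : ZMod p) + 1) /
                (64 * (3 * (t : ZMod p) + 5) ^ 3)) ^ k
    ∧
    (∑ k ∈ Finset.range ((p - 1) / 2 + 1),
        (Nat.choose (2 * k) k : ZMod p) ^ 2 * (Nat.choose (4 * k) (2 * k) : ZMod p) *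
          ((1 - (t : ZMod p) ^ 2) / 256) ^ k)
      = ((legendreSym p (10 - 6 * t) : ℤ) : ZMod p) *
          ∑ k ∈ Finset.range (p / 6 + 1),
            (Nat.choose (2 * k) k : ZMod p) * (Nat.choose (3 * k) k : ZMod p) *
              (Nat.choose (6 * k) (3 * k) : ZMod p) *
              (((t : ZMod p) + 1) ^ 2 * ((t : ZMod p) - 1) /
                (64 * (3 * (t : ZMod p) - 5) ^ 3)) ^ k := by
  simp only [legendreSym.eq_pow]
  have cast_ne {a : ℤ} (h : ¬ (3 * t ≡ a [ZMOD (p : ℤ)])) : 3 * (t : ZMod p) ≠ a := fun h' ↦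
    h ((ZMod.intCast_eq_intCast_iff _ _ p).mp (by simpa using h'))
  simpa [levelTwoCoeff, levelOneCoeff] using
    stmt_2_general p hp (t : ZMod p) (by simpa using cast_ne h1) (by simpa using cast_ne h2)
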